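/- Let π⋆ > 0, α⋆ > 0, q₂ > 0, C₂ ≥ 0, and 0 < r < q₂ (where r = C₁ − q₁ is the residual HOT-lane capacity available to SOVs). For a time horizon T > 0 and a constant paying-SOV flow rate x ∈ (0, r], define the approximate total cost φ_T(x) = π⋆·q₂·(q₂ − x − C₂)·T²/2 + (1/α⋆)·x·ln((q₂ − x)/x)·T. Then for every x ∈ (0, r) there exists T₀ > 0 such that for all T ≥ T₀, φ_T(r) < φ_T(x). In other words, for sufficiently long horizons the choice q₃ = C₁ − q₁ (equivalently, zero residual capacity ζ = 0) minimizes the approximate total cost, so maximizing the HOT lanes' throughput approximately solves the cost-minimization (social welfare optimization) problem under the logit lane-choice model. -/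

import Mathlib

/-- Under the logit lane-choice model, for long enough horizons the approximate
total cost `φ_T(x) = π⋆ q₂ (q₂ - x - C₂) T²/2 + (1/α⋆) x ln((q₂ - x)/x) T` is
minimized over `(0, r]` at `x = r = C₁ - q₁`: for every `x ∈ (0, r)` there is
`T₀ > 0` such that `φ_T(r) < φ_T(x)` for all `T ≥ T₀`.  Hence maximizing the HOT
lanes' throughput approximately solves the social welfare optimization problem. -/
theorem throughput_maximization_approx_welfare_optimal
    (πs αs q₂ C₂ r : ℝ)
    (hπ : 0 < πs) (hα : 0 < αs) (hq₂ : 0 < q₂) (hC₂ : 0 ≤ C₂)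
    (hr0 : 0 < r) (hrq : r < q₂)
    (φ : ℝ → ℝ → ℝ)
    (hφ : ∀ T x, φ T x =
      πs * q₂ * (q₂ - x - C₂) * T ^ 2 / 2 + (1 / αs) * x * Real.log ((q₂ - x) / x) * T) :
    ∀ x ∈ Set.Ioo 0 r, ∃ T₀ > 0, ∀ T ≥ T₀, φ T r < φ T x := by
  rintro x ⟨hx0, hxr⟩
  have hA : 0 < πs * q₂ * (r - x) / 2 := by
    have := sub_pos.mpr hxr
    positivity
  set A := πs * q₂ * (r - x) / 2 with hAdef
  obtain ⟨b, hb⟩ : ∃ b, b = (1 / αs) * r * Real.log ((q₂ - r) / r) := ⟨_, rfl⟩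
  obtain ⟨c, hc⟩ : ∃ c, c = (1 / αs) * x * Real.log ((q₂ - x) / x) := ⟨_, rfl⟩
  refine ⟨|b - c| / A + 1, by positivity, fun T hT => ?_⟩
  have hT0 : 0 < T := lt_of_lt_of_le (by positivity) hT
  have h1 : |b - c| / A < T := by linarith
  rw [div_lt_iff₀ hA] at h1
  have h2 : b - c < T * A := lt_of_le_of_lt (le_abs_self _) h1
  have h3 := mul_pos hT0 (sub_pos.mpr h2)
  rw [hφ, hφ, ← hb, ← hc]
  rw [hAdef] at h3
  nlinarith [h3]
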